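/- Let X₁, …, Xₙ be real random variables on a common probability space such that for each i, Xᵢ ∈ [0, bᵢ] almost surely, E[Xᵢ] = μᵢ, and E[|Xᵢ − μᵢ|] = dᵢ, with no assumption on their dependence. Write Sₙ = Σᵢ Xᵢ, μ̄ = Σᵢ μᵢ, b̄ = Σᵢ bᵢ, and suppose E[|Sₙ − μ̄|] ≤ d̂ for some d̂ > 0. Let m > 0, z ≥ 0, and φ(z, s) = min{m, max{s − z, 0}}. Then: E[φ(z, Sₙ)] ≤ m if z ≤ m+z ≤ μ̄; E[φ(z, Sₙ)] ≤ min{ mμ̄/(m+z), z(d̂/(2μ̄) − 1) + μ̄ } if z ≤ μ̄ ≤ z+m ≤ b̄; and E[φ(z, Sₙ)] ≤ min{ mμ̄/(m+z), d̂m/(2(m+z−μ̄)) } if μ̄ ≤ z ≤ z+m ≤ b̄. -/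

import Mathlib

/-!
Each bound comes from a majorant of `s ↦ stopLossBenefit m z s` on `[0, ∞)` of the form
`s ↦ a + c * s + e * |s - μ̄|` with `e ≥ 0`: its expectation is at most `a + c * μ̄ + e * dhat`,
whatever the dependence structure (`integral_le_of_majorant`). The majorants are the chord
`m * s / (m + z)` through the origin and the kink `m + z`; for `z ≤ μ̄` the function
`(s - z) + (z / μ̄) * max (μ̄ - s) 0`; and for `μ̄ ≤ z` the function
`m / (m + z - μ̄) * max (s - μ̄) 0`, where `max t 0 = (|t| + t) / 2`.
-/


open MeasureTheory Set

/-- The stop-loss benefit function with retention limit `z` and maximum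
coverage `m`: `φ(z, s) = min{m, max{s − z, 0}}`. -/
def stopLossBenefit (m z s : ℝ) : ℝ := min m (max (s - z) 0)

lemma stopLossBenefit_le_chord {m z s : ℝ} (hm : 0 < m) (hz : 0 ≤ z) (hs : 0 ≤ s) :
    stopLossBenefit m z s ≤ m / (m + z) * s := by
  unfold stopLossBenefit
  have hp : 0 < m + z := by linarith
  rw [div_mul_eq_mul_div, le_div_iff₀ hp]
  rcases le_total (m + z) s with h | h
  · have := min_le_left m (max (s - z) 0)
    nlinarith
  · have h1 := min_le_right m (max (s - z) 0)
    rcases max_cases (s - z) 0 with ⟨h2, _⟩ | ⟨h2, _⟩ <;> rw [h2] at h1 ⊢ <;> nlinarith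

/-- The majorant `(s - z) + (z / μ) * max (μ - s) 0`, which rests on
`max (z - s) 0 ≤ (z / μ) * max (μ - s) 0` for `s ≥ 0`. -/
lemma stopLossBenefit_le_of_le_mean {m z s μ : ℝ} (hz : 0 ≤ z) (hs : 0 ≤ s) (hμ : 0 < μ)
    (hzμ : z ≤ μ) :
    stopLossBenefit m z s ≤ (z / 2 - z) + (1 - z / (2 * μ)) * s + z / (2 * μ) * |s - μ| := by
  unfold stopLossBenefit
  refine (min_le_right _ _).trans ?_
  obtain ⟨t, rfl⟩ : ∃ t, z = t * μ := ⟨z / μ, by field_simp⟩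
  have ht0 : 0 ≤ t := nonneg_of_mul_nonneg_left hz hμ
  have ht1 : t ≤ 1 := by
    by_contra! h
    nlinarith
  have e : t * μ / (2 * μ) = t / 2 := by field_simp
  rw [e]
  have h1 := mul_le_mul_of_nonneg_left (neg_le_abs (s - μ)) ht0
  have h2 := mul_le_mul_of_nonneg_left (le_abs_self (s - μ)) ht0
  have h3 : 0 ≤ (1 - t) * s := mul_nonneg (by linarith) hs
  exact max_le (by linarith) (by linarith)

/-- The majorant `m / (m + z - μ) * max (s - μ) 0`, touching the benefit at `s = m + z`. -/
lemma stopLossBenefit_le_of_mean_le {m z s μ : ℝ} (hm : 0 < m) (hzμ : μ ≤ z) :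
    stopLossBenefit m z s ≤ -(m / (2 * (m + z - μ)) * μ) + m / (2 * (m + z - μ)) * s
      + m / (2 * (m + z - μ)) * |s - μ| := by
  have hp : 0 < m + z - μ := by linarith
  have e : -(m / (2 * (m + z - μ)) * μ) + m / (2 * (m + z - μ)) * s
      + m / (2 * (m + z - μ)) * |s - μ| = m * (((s - μ) + |s - μ|) / 2) / (m + z - μ) := by
    field_simp
    ring
  rw [e, le_div_iff₀ hp]
  unfold stopLossBenefit
  have h3 : 0 ≤ ((s - μ) + |s - μ|) / 2 := by linarith [neg_le_abs (s - μ)]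
  have h4 : s - μ ≤ ((s - μ) + |s - μ|) / 2 := by linarith [le_abs_self (s - μ)]
  generalize ((s - μ) + |s - μ|) / 2 = w at *
  rcases le_total (m + z) s with h | h
  · have := min_le_left m (max (s - z) 0)
    nlinarith
  · have h1 := min_le_right m (max (s - z) 0)
    rcases max_cases (s - z) 0 with ⟨h2, _⟩ | ⟨h2, _⟩ <;> rw [h2] at h1 ⊢ <;> nlinarith

lemma integrable_stopLossBenefit {Ω : Type*} [MeasurableSpace Ω] {P : Measure Ω}
    [IsProbabilityMeasure P] {S : Ω → ℝ} (hS : Measurable S) {m z : ℝ} (hm : 0 < m) :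
    Integrable (fun ω => stopLossBenefit m z (S ω)) P := by
  refine Integrable.of_bound (C := m) ?_ (ae_of_all _ fun ω => ?_)
  · unfold stopLossBenefit
    exact (by fun_prop : Measurable fun ω => min m (max (S ω - z) 0)).aestronglyMeasurable
  · have h : 0 ≤ stopLossBenefit m z (S ω) := le_min hm.le (le_max_right _ _)
    rw [Real.norm_of_nonneg h]
    exact min_le_left _ _

/-- A majorant `a + c * s + e * |s - μ|` with `e ≥ 0` bounds the expectation using only the mean
and an upper bound on the mean absolute deviation. -/
lemma integral_le_of_majorant {Ω : Type*} [MeasurableSpace Ω] {P : Measure Ω}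
    [IsProbabilityMeasure P] {S f : Ω → ℝ} {μ D a c e : ℝ} (hf : Integrable f P)
    (hS : Integrable S P) (hmean : ∫ ω, S ω ∂P = μ) (hmad : ∫ ω, |S ω - μ| ∂P ≤ D)
    (he : 0 ≤ e) (h : ∀ᵐ ω ∂P, f ω ≤ a + c * S ω + e * |S ω - μ|) :
    ∫ ω, f ω ∂P ≤ a + c * μ + e * D := by
  have i1 : Integrable (fun ω => a + c * S ω) P := (integrable_const a).add (hS.const_mul c)
  have i2 : Integrable (fun ω => e * |S ω - μ|) P :=
    (hS.sub (integrable_const μ)).abs.const_mul e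
  calc ∫ ω, f ω ∂P ≤ ∫ ω, (a + c * S ω + e * |S ω - μ|) ∂P :=
        integral_mono_ae hf (i1.add i2) h
    _ = a + c * μ + e * ∫ ω, |S ω - μ| ∂P := by
        rw [integral_add i1 i2, integral_add (integrable_const a) (hS.const_mul c),
          integral_const_mul, integral_const_mul, hmean]
        simp
    _ ≤ a + c * μ + e * D := by gcongr

/-- Theorem 9 (stop-loss bound for sums of random variables with mean-MAD
information and arbitrary dependence): upper bounds on the expected capped
stop-loss payment `E[φ(z, Sₙ)]` of the aggregate claim `Sₙ = Σᵢ Xᵢ`. -/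
theorem sum_stopLoss_bound_meanMAD {Ω : Type*} [MeasurableSpace Ω]
    (P : Measure Ω) [IsProbabilityMeasure P]
    (n : ℕ) (X : Fin n → Ω → ℝ) (b μv d : Fin n → ℝ)
    (hmeas : ∀ i, Measurable (X i))
    (hsupp : ∀ i, ∀ᵐ ω ∂P, X i ω ∈ Icc 0 (b i))
    (hmean : ∀ i, (∫ ω, X i ω ∂P) = μv i)
    (hmad : ∀ i, (∫ ω, |X i ω - μv i| ∂P) = d i)
    (dhat : ℝ) (hdhat : 0 < dhat)
    (hsum : (∫ ω, |(∑ i, X i ω) - ∑ i, μv i| ∂P) ≤ dhat)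
    (m z : ℝ) (hm : 0 < m) (hz : 0 ≤ z) :
    (m + z ≤ ∑ i, μv i →
      (∫ ω, stopLossBenefit m z (∑ i, X i ω) ∂P) ≤ m) ∧
    (z ≤ ∑ i, μv i → (∑ i, μv i) ≤ z + m → z + m ≤ ∑ i, b i →
      (∫ ω, stopLossBenefit m z (∑ i, X i ω) ∂P) ≤
        min (m * (∑ i, μv i) / (m + z))
          (z * (dhat / (2 * ∑ i, μv i) - 1) + ∑ i, μv i)) ∧
    ((∑ i, μv i) ≤ z → z + m ≤ ∑ i, b i →
      (∫ ω, stopLossBenefit m z (∑ i, X i ω) ∂P) ≤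
        min (m * (∑ i, μv i) / (m + z))
          (dhat * m / (2 * (m + z - ∑ i, μv i)))) := by
  have hXint : ∀ i, Integrable (X i) P := fun i =>
    Integrable.of_mem_Icc 0 (b i) (hmeas i).aemeasurable (hsupp i)
  have hSint : Integrable (fun ω => ∑ i, X i ω) P := integrable_finsetSum _ fun i _ => hXint i
  have hSmeas : Measurable (fun ω => ∑ i, X i ω) := by fun_prop
  have hSmean : ∫ ω, ∑ i, X i ω ∂P = ∑ i, μv i := by
    rw [integral_finsetSum _ fun i _ => hXint i]
    exact Finset.sum_congr rfl fun i _ => hmean i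
  have hSnn : ∀ᵐ ω ∂P, 0 ≤ ∑ i, X i ω := by
    filter_upwards [ae_all_iff.2 hsupp] with ω hω
    exact Finset.sum_nonneg fun i _ => (hω i).1
  have hφ := integrable_stopLossBenefit (P := P) (z := z) hSmeas hm
  have hμ0 : 0 ≤ ∑ i, μv i := hSmean ▸ integral_nonneg_of_ae hSnn
  generalize (∑ i, μv i) = μ at *
  have hchord : ∫ ω, stopLossBenefit m z (∑ i, X i ω) ∂P ≤ m * μ / (m + z) := by
    have := integral_le_of_majorant (a := 0) (c := m / (m + z)) (e := 0) hφ hSint hSmean hsum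
      le_rfl (by
        filter_upwards [hSnn] with ω hω
        simpa using stopLossBenefit_le_chord hm hz hω)
    calc _ ≤ _ := this
      _ = _ := by ring
  refine ⟨fun _ => ?_, fun hzμ _ _ => le_min hchord ?_, fun hμz _ => le_min hchord ?_⟩
  · simpa using integral_mono hφ (integrable_const m) fun ω => min_le_left _ _
  · rcases hμ0.eq_or_lt with h0 | hpos
    -- When `μ = 0` the division by `2 * μ` is junk, but then `z = 0` and both bounds vanish.
    · have hz0 : z = 0 := by linarith
      subst hz0
      subst h0
      simpa using hchord
    · have := integral_le_of_majorant hφ hSint hSmean hsum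
        (by positivity : 0 ≤ z / (2 * μ)) (by
          filter_upwards [hSnn] with ω hω
          exact stopLossBenefit_le_of_le_mean hz hω hpos hzμ)
      calc _ ≤ _ := this
        _ = _ := by
          field_simp
          ring
  · have hp : 0 < m + z - μ := by linarith
    have := integral_le_of_majorant hφ hSint hSmean hsum
      (by positivity : 0 ≤ m / (2 * (m + z - μ)))
      (ae_of_all _ fun ω => stopLossBenefit_le_of_mean_le hm hμz)
    calc _ ≤ _ := this
      _ = _ := by ring
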